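/- arXiv:2603.17772 — 2 statements merged into one kernel-verified Lean document; each statement's English description precedes it below -/
import Mathlib

section
/- Let n ≥ 3 and let f : S₀ⁿ → A be onto and pairwise strategy-proof. Let R̄ ∈ S₀ⁿ be a profile in which every agent has a single-peaked preference, τ(R̄_i) = 0 for all i ∈ {1,…,n−1}, and τ(R̄_n) = 1, and set x = f(R̄). Then for every profile R ∈ S₀ⁿ with R ≠ R^{0N} and τ̄(R) < x, f(R) = τ̄(R). -/
/-- The set of alternatives: the closed interval [0,1]. -/
abbrev A : Type := Set.Icc (0:ℝ) 1

def zeroA : A := ⟨0, by constructor <;> norm_num⟩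
def oneA : A := ⟨1, by constructor <;> norm_num⟩

/-- A preference: a complete (total) and transitive binary relation on A. -/
structure Pref : Type where
  rel : A → A → Prop
  total : ∀ a b : A, rel a b ∨ rel b a
  trans : ∀ a b c : A, rel a b → rel b c → rel a c

/-- Strict part of a preference. -/
def Pref.P (R : Pref) (a b : A) : Prop := R.rel a b ∧ ¬ R.rel b a

/-- `p` is a peak of `R`: `R` is single-peaked with peak `p`. -/
def Pref.IsPeak (R : Pref) (p : A) : Prop :=
  ∀ a b : A, ((p ≤ a ∧ a < b) ∨ (b < a ∧ a ≤ p)) → R.P a b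

/-- Single-peaked preferences. -/
def SinglePeaked (R : Pref) : Prop := ∃ p : A, R.IsPeak p

/-- The completely indifferent preference R⁰. -/
def R0 : Pref :=
  ⟨fun _ _ => True, fun _ _ => Or.inl trivial, fun _ _ _ _ _ => trivial⟩

/-- The augmented domain S₀ = S ∪ {R⁰}. -/
def S0 : Type := {R : Pref // SinglePeaked R ∨ R = R0}

/-- The completely indifferent profile R^{0N}. -/
def indiffProfile (n : ℕ) : Fin n → S0 := fun _ => ⟨R0, Or.inr rfl⟩

open Classical in
/-- The peak of a single-peaked preference (junk value `zeroA` otherwise). -/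
noncomputable def peak (R : Pref) : A :=
  if h : SinglePeaked R then h.choose else zeroA

/-- τ̲(R): the smallest peak among non-indifferent agents (as a real number). -/
noncomputable def tmin {n : ℕ} (R : Fin n → S0) : ℝ :=
  sInf {x : ℝ | ∃ i : Fin n, (R i).1 ≠ R0 ∧ ((peak (R i).1 : ℝ) = x)}

/-- τ̄(R): the largest peak among non-indifferent agents (as a real number). -/
noncomputable def tmax {n : ℕ} (R : Fin n → S0) : ℝ :=
  sSup {x : ℝ | ∃ i : Fin n, (R i).1 ≠ R0 ∧ ((peak (R i).1 : ℝ) = x)}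

/-- Onto-ness. -/
def Onto {n : ℕ} (f : (Fin n → S0) → A) : Prop := ∀ a : A, ∃ R : Fin n → S0, f R = a

/-- (Individual) strategy-proofness. -/
def StrategyProof {n : ℕ} (f : (Fin n → S0) → A) : Prop :=
  ∀ (R : Fin n → S0) (i : Fin n) (Ri' : S0),
    (R i).1.rel (f R) (f (Function.update R i Ri'))

/-- No profitable deviation by the coalition `S`. -/
def CoalitionSP {n : ℕ} (f : (Fin n → S0) → A) (S : Finset (Fin n)) : Prop :=
  ¬ ∃ R R' : Fin n → S0,
      (∀ i ∉ S, R' i = R i) ∧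
      (∀ i ∈ S, (R i).1.rel (f R') (f R)) ∧
      (∃ j ∈ S, (R j).1.P (f R') (f R))

/-- Group strategy-proofness. -/
def GroupSP {n : ℕ} (f : (Fin n → S0) → A) : Prop :=
  ∀ S : Finset (Fin n), S.Nonempty → CoalitionSP f S

/-- Pairwise strategy-proofness. -/
def PairwiseSP {n : ℕ} (f : (Fin n → S0) → A) : Prop :=
  ∀ S : Finset (Fin n), S.Nonempty → S.card ≤ 2 → CoalitionSP f S

/-- No deviation making every member of `S` strictly better off. -/
def WeakCoalitionSP {n : ℕ} (f : (Fin n → S0) → A) (S : Finset (Fin n)) : Prop :=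
  ¬ ∃ R R' : Fin n → S0,
      (∀ i ∉ S, R' i = R i) ∧
      (∀ i ∈ S, (R i).1.P (f R') (f R))

/-- Weak group strategy-proofness. -/
def WeakGroupSP {n : ℕ} (f : (Fin n → S0) → A) : Prop :=
  ∀ S : Finset (Fin n), S.Nonempty → WeakCoalitionSP f S

/-- `a` is efficient at the profile `R`. -/
def EfficientAt {n : ℕ} (R : Fin n → S0) (a : A) : Prop :=
  ¬ ∃ b : A, b ≠ a ∧ (∀ i : Fin n, (R i).1.rel b a) ∧ (∃ j : Fin n, (R j).1.P b a)

/-- Efficiency of a social choice function. -/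
def Efficient {n : ℕ} (f : (Fin n → S0) → A) : Prop := ∀ R : Fin n → S0, EfficientAt R (f R)

/-- The tops-only property. -/
def TopsOnly {n : ℕ} (f : (Fin n → S0) → A) : Prop :=
  ∀ R R' : Fin n → S0,
    (∀ i : Fin n, (R i).1 = R0 ↔ (R' i).1 = R0) →
    (∀ i : Fin n, (R i).1 ≠ R0 → peak (R i).1 = peak (R' i).1) →
    f R = f R'

/-- Target rules with a default. -/
def IsTargetRule {n : ℕ} (f : (Fin n → S0) → A) : Prop :=
  ∃ x y : A, f (indiffProfile n) = y ∧
    ∀ R : Fin n → S0, R ≠ indiffProfile n →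
      ((tmin R ≤ (x : ℝ) ∧ (x : ℝ) ≤ tmax R) → f R = x) ∧
      ((x : ℝ) < tmin R → (f R : ℝ) = tmin R) ∧
      (tmax R < (x : ℝ) → (f R : ℝ) = tmax R)

/-!
Suppose an agent with peak `0` takes part in `Rbar` and `t = τ̄(R) ≤ f Rbar`. Raising all other
agents to peak `1` can only raise the outcome. Since a coalition of an indifferent agent and one
further agent cannot gain, an indifferent agent whose opponents include both a peak `0` and a
peak `1` has no influence at all; with three agents this makes the outcome the same at all
profiles containing both extreme peaks. Hence if agent `j` has peak `t` in `R` and everyone else is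
moved to peak `0`, then `j` could force an outcome of at least `t` by reporting peak `1`. Outcomes
never exceed the largest peak, so `j` could equally obtain exactly `t`, and strategy-proofness then
gives `j` the outcome `t`. Moving the others to peak `0` only lowered the outcome, so `t ≤ f R`.
-/

theorem update_induction {ι : Type*} {π : ι → Type*} [Finite ι] [DecidableEq ι]
    {p : (∀ i, π i) → Prop} {x y : ∀ i, π i} (hx : p x)
    (step : ∀ z i, z i = x i → y i ≠ x i → p z → p (Function.update z i (y i))) : p y := by
  have := Fintype.ofFinite ι
  suffices ∀ s : Finset ι, p (s.piecewise y x) by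
    simpa only [Finset.piecewise_univ] using this Finset.univ
  intro s
  induction s using Finset.induction_on with
  | empty => simpa only [Finset.piecewise_empty] using hx
  | insert i s hi ih =>
    rw [Finset.piecewise_insert]
    have hsi : s.piecewise y x i = x i := Finset.piecewise_eq_of_notMem s y x hi
    by_cases hyx : y i = x i
    · rwa [hyx, ← hsi, Function.update_eq_self]
    · exact step _ i hsi hyx ih

theorem zeroA_le (a : A) : zeroA ≤ a := a.2.1

theorem le_oneA (a : A) : a ≤ oneA := a.2.2

namespace Pref

section IsPeak

variable {R : Pref} {p y z : A}

theorem IsPeak.le_of_rel (h : R.IsPeak p) (hz : p ≤ z) (hyz : R.rel y z) : y ≤ z :=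
  not_lt.mp fun hlt => (h z y (Or.inl ⟨hz, hlt⟩)).2 hyz

theorem IsPeak.ge_of_rel (h : R.IsPeak p) (hz : z ≤ p) (hyz : R.rel y z) : z ≤ y :=
  not_lt.mp fun hlt => (h z y (Or.inr ⟨hlt, hz⟩)).2 hyz

theorem IsPeak.eq_of_rel (h : R.IsPeak p) (hy : R.rel y p) : y = p :=
  le_antisymm (h.le_of_rel le_rfl hy) (h.ge_of_rel le_rfl hy)

theorem IsPeak.ne_R0 (h : R.IsPeak p) : R ≠ R0 := by
  rintro rfl
  have h01 : zeroA = oneA := (h.eq_of_rel trivial).trans (h.eq_of_rel trivial).symm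
  exact zero_ne_one (congrArg Subtype.val h01)

end IsPeak

/-- `R.PeakLE t`: the preference `R` is completely indifferent or single-peaked with a peak at
most `t`, so that no rise of an outcome that is at least `t` benefits an agent with this
preference. -/
def PeakLE (R : Pref) (t : A) : Prop := R = R0 ∨ ∃ p ≤ t, R.IsPeak p

/-- The single-peaked preference with peak `t` that ranks every alternative above `t` higher than
every alternative below `t`: an agent reporting it gets an outcome `≥ t` whenever some other
report yields one. It is represented by a utility that is nonnegative exactly on `[t, 1]`. -/
noncomputable def upperPeaked (t : A) : Pref :=
  let u : A → ℝ := fun a => if t ≤ a then 1 - (a : ℝ) else (a : ℝ) - 1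
  ⟨fun a b => u b ≤ u a, fun _ _ => le_total _ _, fun _ _ _ hab hbc => hbc.trans hab⟩

theorem isPeak_upperPeaked (t : A) : (upperPeaked t).IsPeak t := by
  suffices ∀ a b : A, (t ≤ a ∧ a < b) ∨ (b < a ∧ a ≤ t) → ¬ (upperPeaked t).rel b a from
    fun a b hab => ⟨((upperPeaked t).total a b).resolve_right (this a b hab), this a b hab⟩
  rintro a b (⟨hta, hab⟩ | ⟨hba, hat⟩)
  · have hab' : (a : ℝ) < b := hab
    simp only [upperPeaked, hta, hta.trans hab.le, if_true, not_le]
    linarith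
  · have hb : ¬ t ≤ b := not_le.mpr (hba.trans_le hat)
    have ha1 : (a : ℝ) ≤ 1 := a.2.2
    have hba' : (b : ℝ) < a := hba
    simp only [upperPeaked, hb, if_false, not_le]
    split_ifs <;> linarith

end Pref

namespace S0

/-- The preference `Pref.upperPeaked t` as an element of the domain. -/
noncomputable def upperPeaked (t : A) : S0 :=
  ⟨Pref.upperPeaked t, Or.inl ⟨t, Pref.isPeak_upperPeaked t⟩⟩

theorem isPeak_upperPeaked (t : A) : (upperPeaked t).1.IsPeak t :=
  Pref.isPeak_upperPeaked t

theorem le_of_upperPeaked_rel {t y z : A} (hz : t ≤ z) (hyz : (upperPeaked t).1.rel y z) :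
    t ≤ y := by
  by_contra hy
  have hz1 : (z : ℝ) ≤ 1 := z.2.2
  have hyt : (y : ℝ) < t := not_le.mp hy
  have ht1 : (t : ℝ) ≤ 1 := t.2.2
  simp only [upperPeaked, Pref.upperPeaked, hz, hy, if_true, if_false] at hyz
  linarith

theorem isPeak_peak {R : S0} (h : R.1 ≠ R0) : R.1.IsPeak (peak R.1) := by
  have hR : SinglePeaked R.1 := R.2.resolve_right h
  rw [peak, dif_pos hR]
  exact hR.choose_spec

end S0

section LargestPeak

variable {n : ℕ} {R : Fin n → S0}

theorem isGreatest_tmax (hR : R ≠ indiffProfile n) :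
    IsGreatest {x : ℝ | ∃ i : Fin n, (R i).1 ≠ R0 ∧ ((peak (R i).1 : ℝ) = x)} (tmax R) := by
  set peaks := {x : ℝ | ∃ i : Fin n, (R i).1 ≠ R0 ∧ ((peak (R i).1 : ℝ) = x)}
  have hfin : peaks.Finite := by
    refine (Set.finite_range fun i => (peak (R i).1 : ℝ)).subset ?_
    rintro _ ⟨i, -, rfl⟩
    exact Set.mem_range_self i
  obtain ⟨i, hi⟩ : ∃ i, R i ≠ indiffProfile n i := Function.ne_iff.mp hR
  have hne : peaks.Nonempty := ⟨_, i, fun h => hi (Subtype.ext h), rfl⟩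
  exact ⟨hne.csSup_mem hfin, fun _ hx => le_csSup hfin.bddAbove hx⟩

theorem exists_isPeak_eq_tmax (hR : R ≠ indiffProfile n) :
    ∃ (j : Fin n) (t : A),
      (t : ℝ) = tmax R ∧ (R j).1.IsPeak t ∧ ∀ i, (R i).1.PeakLE t := by
  obtain ⟨⟨j, hj, hjt⟩, hmax⟩ := isGreatest_tmax hR
  refine ⟨j, peak (R j).1, hjt, S0.isPeak_peak hj, fun i => or_iff_not_imp_left.mpr fun hi => ?_⟩
  have hle : (peak (R i).1 : ℝ) ≤ peak (R j).1 := hjt ▸ hmax ⟨i, hi, rfl⟩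
  exact ⟨peak (R i).1, hle, S0.isPeak_peak hi⟩

end LargestPeak

section StrategyProof

variable {n : ℕ} {f : (Fin n → S0) → A} {R R' : Fin n → S0}

theorem StrategyProof.update_rel (hf : StrategyProof f) (R : Fin n → S0) (i : Fin n) (r : S0) :
    r.1.rel (f (Function.update R i r)) (f R) := by
  simpa using hf (Function.update R i r) i (R i)

theorem StrategyProof.apply_le_of_isPeak_zeroA (hf : StrategyProof f)
    (h : ∀ i, R' i ≠ R i → (R' i).1.IsPeak zeroA) : f R' ≤ f R :=
  update_induction (p := fun U => f U ≤ f R) le_rfl fun U i _ hi hU =>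
    ((h i hi).le_of_rel (zeroA_le _) (hf.update_rel U i (R' i))).trans hU

theorem StrategyProof.le_apply_of_isPeak_oneA (hf : StrategyProof f)
    (h : ∀ i, R' i ≠ R i → (R' i).1.IsPeak oneA) : f R ≤ f R' :=
  update_induction (p := fun U => f R ≤ f U) le_rfl fun U i _ hi hU =>
    hU.trans ((h i hi).ge_of_rel (le_oneA _) (hf.update_rel U i (R' i)))

end StrategyProof

namespace PairwiseSP

variable {n : ℕ} {f : (Fin n → S0) → A} {R R' : Fin n → S0} {i j k l : Fin n} {r : S0} {t : A}

theorem strategyProof (hf : PairwiseSP f) : StrategyProof f := by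
  intro R i r
  by_contra hc
  have hgain := ((R i).1.total _ _).resolve_left hc
  refine hf {i} (Finset.singleton_nonempty i) (by simp) ⟨R, Function.update R i r, ?_, ?_, ?_⟩
  · exact fun m hm => Function.update_of_ne (Finset.notMem_singleton.mp hm) _ _
  · exact fun m hm => Finset.mem_singleton.mp hm ▸ hgain
  · exact ⟨i, Finset.mem_singleton_self i, hgain, hc⟩

theorem update_rel_of_indifferent (hf : PairwiseSP f) (hr : r.1 = R0) (hji : j ≠ i) :
    (R j).1.rel (f (Function.update R i r)) (f R) := by
  by_contra hc
  have hgain := ((R j).1.total _ _).resolve_left hc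
  refine hf {i, j} (Finset.insert_nonempty i _) Finset.card_le_two
    ⟨Function.update R i r, R, ?_, ?_, j, by simp, ?_⟩
  · intro m hm
    have hmi : m ≠ i := by
      rintro rfl
      exact hm (Finset.mem_insert_self m _)
    exact (Function.update_of_ne hmi _ _).symm
  · intro m hm
    obtain rfl | rfl : m = i ∨ m = j := by simpa using hm
    · simp [hr, R0]
    · rwa [Function.update_of_ne hji]
  · rw [Function.update_of_ne hji]
    exact ⟨hgain, hc⟩

theorem apply_eq_of_unanimous (hf : PairwiseSP f) (hOnto : Onto f)
    (hR : ∀ i, (R i).1 = R0 ∨ (R i).1.IsPeak t) (hj : (R j).1.IsPeak t) : f R = t := by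
  obtain ⟨S, hS⟩ := hOnto t
  have hstart : f (Function.update S j (R j)) = t :=
    hj.eq_of_rel (hS ▸ hf.strategyProof.update_rel S j (R j))
  have hmain : R j = R j ∧ f R = t :=
    update_induction (p := fun U => U j = R j ∧ f U = t)
      ⟨Function.update_self .., hstart⟩ fun U i _ hi ⟨hUj, hU⟩ => by
        have hji : j ≠ i := by
          rintro rfl
          simp at hi
        refine ⟨by rw [Function.update_of_ne hji, hUj], ?_⟩
        rcases hR i with h0 | hpeak
        · have hrel := hf.update_rel_of_indifferent (R := U) h0 hji
          rw [hUj, hU] at hrel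
          exact hj.eq_of_rel hrel
        · exact hpeak.eq_of_rel (hU ▸ hf.strategyProof.update_rel U i (R i))
  exact hmain.2

theorem apply_le_of_peakLE (hf : PairwiseSP f) (hOnto : Onto f)
    (hR : ∀ i, (R i).1.PeakLE t) (hj : (R j).1 ≠ R0) : f R ≤ t := by
  classical
  by_contra hc
  let T : Fin n → S0 := fun i => if (R i).1 = R0 then R i else S0.upperPeaked t
  have hT : f T = t := by
    refine hf.apply_eq_of_unanimous hOnto (j := j) (fun i => ?_) ?_
    · by_cases hi : (R i).1 = R0
      · simp [T, hi]
      · simpa [T, hi] using Or.inr (S0.isPeak_upperPeaked t)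
    · simpa [T, hj] using S0.isPeak_upperPeaked t
  have hlt : t < f T := by
    refine update_induction (p := fun U => t < f U) (not_le.mp hc) fun U i hUi hi hU => ?_
    have hi0 : (R i).1 ≠ R0 := fun h => hi (by simp [T, h])
    obtain ⟨p, hpt, hp⟩ := (hR i).resolve_left hi0
    have hTi : T i = S0.upperPeaked t := by simp [T, hi0]
    rw [hTi]
    have hle : t ≤ f (Function.update U i (S0.upperPeaked t)) :=
      S0.le_of_upperPeaked_rel hU.le (hf.strategyProof.update_rel U i _)
    have hrel := hf.strategyProof U i (S0.upperPeaked t)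
    rw [hUi] at hrel
    exact hU.trans_le (hp.le_of_rel (hpt.trans hle) hrel)
  exact hlt.ne' hT

theorem apply_update_eq_of_isPeak (hf : PairwiseSP f) (hOnto : Onto f)
    (hR : ∀ i, i ≠ j → (R i).1.PeakLE t) (hr : r.1.IsPeak t) (ht : t ≤ f R) :
    f (Function.update R j r) = t := by
  set C := Function.update R j (S0.upperPeaked t) with hC
  have hge : t ≤ f C := S0.le_of_upperPeaked_rel ht (hf.strategyProof.update_rel R j _)
  have hle : f C ≤ t := by
    refine hf.apply_le_of_peakLE hOnto (j := j) (fun i => ?_) ?_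
    · rcases eq_or_ne i j with rfl | hij
      · rw [hC, Function.update_self]
        exact Or.inr ⟨t, le_rfl, S0.isPeak_upperPeaked t⟩
      · simpa [hC, hij] using hR i hij
    · rw [hC, Function.update_self]
      exact (S0.isPeak_upperPeaked t).ne_R0
  have hrel := hf.strategyProof.update_rel C j r
  rw [le_antisymm hle hge, hC, Function.update_idem] at hrel
  exact hr.eq_of_rel hrel

theorem apply_update_eq_of_opposed (hf : PairwiseSP f) (hk : (R k).1.IsPeak zeroA)
    (hl : (R l).1.IsPeak oneA) (hki : k ≠ i) (hli : l ≠ i) :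
    f (Function.update R i r) = f R := by
  let r₀ : S0 := ⟨R0, Or.inr rfl⟩
  have hindiff : ∀ U : Fin n → S0, (U k).1.IsPeak zeroA → (U l).1.IsPeak oneA →
      f (Function.update U i r₀) = f U := fun U hUk hUl =>
    le_antisymm (hUk.le_of_rel (zeroA_le _) (hf.update_rel_of_indifferent rfl hki))
      (hUl.ge_of_rel (le_oneA _) (hf.update_rel_of_indifferent rfl hli))
  calc f (Function.update R i r)
      = f (Function.update (Function.update R i r) i r₀) :=
        (hindiff _ (by rwa [Function.update_of_ne hki]) (by rwa [Function.update_of_ne hli])).symm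
    _ = f (Function.update R i r₀) := by rw [Function.update_idem]
    _ = f R := hindiff R hk hl

theorem apply_eq_of_opposed (hf : PairwiseSP f) (hk : (R k).1.IsPeak zeroA)
    (hl : (R l).1.IsPeak oneA) (hk' : R' k = R k) (hl' : R' l = R l) : f R' = f R := by
  have hmain : R' k = R k ∧ R' l = R l ∧ f R' = f R :=
    update_induction (p := fun U => U k = R k ∧ U l = R l ∧ f U = f R)
      ⟨rfl, rfl, rfl⟩ fun U i _ hi ⟨hUk, hUl, hU⟩ => by
        have hki : k ≠ i := by
          rintro rfl
          exact hi hk'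
        have hli : l ≠ i := by
          rintro rfl
          exact hi hl'
        refine ⟨by rwa [Function.update_of_ne hki], by rwa [Function.update_of_ne hli], ?_⟩
        rw [hf.apply_update_eq_of_opposed (hUk ▸ hk) (hUl ▸ hl) hki hli, hU]
  exact hmain.2.2

theorem apply_single_zeroA_eq_single_oneA (hf : PairwiseSP f) (hn : 3 ≤ n) {r₀ r₁ : S0}
    (h₀ : r₀.1.IsPeak zeroA) (h₁ : r₁.1.IsPeak oneA) (k j : Fin n) :
    f (Function.update (fun _ => r₁) k r₀) = f (Function.update (fun _ => r₀) j r₁) := by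
  have hne : ∀ k j : Fin n, k ≠ j →
      f (Function.update (fun _ => r₁) k r₀) = f (Function.update (fun _ => r₀) j r₁) :=
    fun k j hkj => hf.apply_eq_of_opposed (k := k) (l := j)
      (by simpa [hkj] using h₀) (by simpa using h₁) (by simp [hkj]) (by simp [hkj.symm])
  rcases ne_or_eq k j with hkj | rfl
  · exact hne k j hkj
  obtain ⟨l, hlk, -⟩ := Fin.exists_ne_and_ne_of_two_lt k k hn
  obtain ⟨m, hmk, hml⟩ := Fin.exists_ne_and_ne_of_two_lt k l hn
  calc f (Function.update (fun _ => r₁) k r₀)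
      = f (Function.update (fun _ => r₀) m r₁) := hne k m hmk.symm
    _ = f (Function.update (fun _ => r₁) l r₀) := (hne l m hml.symm).symm
    _ = f (Function.update (fun _ => r₀) k r₁) := hne l k hlk

theorem apply_le_apply_single_oneA (hf : PairwiseSP f) (hn : 3 ≤ n) {r₁ : S0}
    (hk : (R k).1.IsPeak zeroA) (h₁ : r₁.1.IsPeak oneA) (j : Fin n) :
    f R ≤ f (Function.update (fun _ => R k) j r₁) := by
  rw [← hf.apply_single_zeroA_eq_single_oneA hn hk h₁ k j]
  refine hf.strategyProof.le_apply_of_isPeak_oneA fun i hi => ?_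
  have hik : i ≠ k := by
    rintro rfl
    simp at hi
  rwa [Function.update_of_ne hik]

end PairwiseSP

theorem stmt_12_general {n : ℕ} (hn : 3 ≤ n) {f : (Fin n → S0) → A} (hOnto : Onto f)
    (hPSP : PairwiseSP f) {Rbar : Fin n → S0} {k : Fin n} (hk : (Rbar k).1.IsPeak zeroA)
    {R : Fin n → S0} (hR : R ≠ indiffProfile n) (hx : tmax R ≤ (f Rbar : ℝ)) :
    (f R : ℝ) = tmax R := by
  obtain ⟨j, t, ht, hj, hle⟩ := exists_isPeak_eq_tmax hR
  rw [← ht] at hx ⊢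
  refine congrArg Subtype.val (le_antisymm (hPSP.apply_le_of_peakLE hOnto hle hj.ne_R0) ?_)
  let V : Fin n → S0 := Function.update (fun _ => Rbar k) j (S0.upperPeaked oneA)
  have htV : t ≤ f V :=
    (show t ≤ f Rbar from hx).trans
      (hPSP.apply_le_apply_single_oneA hn hk (S0.isPeak_upperPeaked oneA) j)
  have hV : ∀ i, i ≠ j → V i = Rbar k := fun i hij => Function.update_of_ne hij _ _
  calc t = f (Function.update V j (R j)) :=
        (hPSP.apply_update_eq_of_isPeak hOnto
          (fun i hij => Or.inr ⟨zeroA, zeroA_le t, by rwa [hV i hij]⟩) hj htV).symm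
    _ ≤ f R := hPSP.strategyProof.apply_le_of_isPeak_zeroA fun i hi => by
        have hij : i ≠ j := by
          rintro rfl
          simp at hi
        rwa [Function.update_of_ne hij, hV i hij]

/-- With x the value selected at a profile where agents
1,…,n−1 have peak 0 and agent n has peak 1, every profile R ≠ R^{0N} with
τ̄(R) < x gets outcome τ̄(R). -/
theorem stmt_12 (n : ℕ) (hn : 3 ≤ n) (f : (Fin n → S0) → A)
    (hOnto : Onto f) (hPSP : PairwiseSP f)
    (Rbar : Fin n → S0)
    (h0 : ∀ i : Fin n, (i : ℕ) < n - 1 → (Rbar i).1.IsPeak zeroA)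
    (h1 : (Rbar ⟨n - 1, by omega⟩).1.IsPeak oneA)
    (R : Fin n → S0) (hR : R ≠ indiffProfile n)
    (hx : tmax R < (f Rbar : ℝ)) :
    (f R : ℝ) = tmax R :=
  stmt_12_general hn hOnto hPSP (h0 ⟨0, by omega⟩ (by simp; omega)) hR hx.le
end

section
/- Let n ≥ 2. Every target rule with a default f : S₀ⁿ → A is efficient. -/
/-!
An agent whose peak is at most `a` strictly prefers `a` to everything on its right, and an agent
whose peak is at least `a` strictly prefers `a` to everything on its left. Hence every alternative
between the peaks of two agents is efficient. A target rule projects the target onto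
`[τ̲(R), τ̄(R)]`, whose endpoints are peaks of agents.
-/

namespace Pref

variable {R : Pref} {p a b : A}

theorem IsPeak.not_rel_of_le_of_lt (hp : R.IsPeak p) (hpa : p ≤ a) (hab : a < b) : ¬ R.rel b a :=
  (hp a b (Or.inl ⟨hpa, hab⟩)).2

theorem IsPeak.not_rel_of_lt_of_le (hp : R.IsPeak p) (hba : b < a) (hap : a ≤ p) : ¬ R.rel b a :=
  (hp a b (Or.inr ⟨hba, hap⟩)).2

end Pref

theorem SinglePeaked.isPeak_peak {R : Pref} (hR : SinglePeaked R) : R.IsPeak (peak R) := by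
  rw [peak, dif_pos hR]
  exact hR.choose_spec

section Profile

variable {n : ℕ} {R : Fin n → S0}

theorem efficientAt_indiffProfile (a : A) : EfficientAt (indiffProfile n) a := by
  rintro ⟨b, -, -, j, hj⟩
  exact hj.2 trivial

theorem efficientAt_of_mem_Icc_of_isPeak {i j : Fin n} {p q a : A} (hp : (R i).1.IsPeak p)
    (hq : (R j).1.IsPeak q) (ha : a ∈ Set.Icc p q) : EfficientAt R a := by
  rintro ⟨b, hba, hweak, -⟩
  rcases hba.lt_or_gt with hlt | hgt
  · exact hq.not_rel_of_lt_of_le hlt ha.2 (hweak j)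
  · exact hp.not_rel_of_le_of_lt ha.1 hgt (hweak i)

theorem exists_ne_R0_of_ne_indiffProfile (hR : R ≠ indiffProfile n) : ∃ i, (R i).1 ≠ R0 := by
  by_contra! hindiff
  exact hR (funext fun i => Subtype.ext (hindiff i))

/-- The set `τ(R)` of peaks of the agents that are not completely indifferent, as real numbers;
`tmin R` and `tmax R` are definitionally its infimum and supremum. -/
def peaks (R : Fin n → S0) : Set ℝ :=
  {x : ℝ | ∃ i : Fin n, (R i).1 ≠ R0 ∧ (peak (R i).1 : ℝ) = x}

theorem finite_peaks (R : Fin n → S0) : (peaks R).Finite :=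
  (Set.finite_range fun i => (peak (R i).1 : ℝ)).subset fun _ ⟨i, _, hi⟩ => ⟨i, hi⟩

theorem peaks_nonempty (hR : R ≠ indiffProfile n) : (peaks R).Nonempty :=
  let ⟨i, hi⟩ := exists_ne_R0_of_ne_indiffProfile hR
  ⟨_, i, hi, rfl⟩

theorem tmin_mem_peaks (hR : R ≠ indiffProfile n) : tmin R ∈ peaks R :=
  (peaks_nonempty hR).csInf_mem (finite_peaks R)

theorem tmax_mem_peaks (hR : R ≠ indiffProfile n) : tmax R ∈ peaks R :=
  (peaks_nonempty hR).csSup_mem (finite_peaks R)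

theorem tmin_le_tmax (hR : R ≠ indiffProfile n) : tmin R ≤ tmax R :=
  csInf_le_csSup (peaks_nonempty hR) (finite_peaks R).bddBelow (finite_peaks R).bddAbove

theorem exists_isPeak_of_mem_peaks {x : ℝ} (hx : x ∈ peaks R) :
    ∃ (i : Fin n) (p : A), (R i).1.IsPeak p ∧ (p : ℝ) = x :=
  let ⟨i, hi, hpeak⟩ := hx
  ⟨i, _, ((R i).2.resolve_right hi).isPeak_peak, hpeak⟩

theorem efficientAt_of_mem_Icc_tmin_tmax (hR : R ≠ indiffProfile n) {a : A}
    (ha : (a : ℝ) ∈ Set.Icc (tmin R) (tmax R)) : EfficientAt R a := by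
  obtain ⟨i, p, hp, hpmin⟩ := exists_isPeak_of_mem_peaks (tmin_mem_peaks hR)
  obtain ⟨j, q, hq, hqmax⟩ := exists_isPeak_of_mem_peaks (tmax_mem_peaks hR)
  rw [← hpmin, ← hqmax] at ha
  exact efficientAt_of_mem_Icc_of_isPeak hp hq ha

theorem IsTargetRule.mem_Icc_tmin_tmax {f : (Fin n → S0) → A} (hf : IsTargetRule f)
    (hR : R ≠ indiffProfile n) : (f R : ℝ) ∈ Set.Icc (tmin R) (tmax R) := by
  obtain ⟨x, -, -, htarget⟩ := hf
  obtain ⟨hbetween, hbelow, habove⟩ := htarget R hR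
  rcases lt_or_ge (x : ℝ) (tmin R) with hlt | hmin
  · rw [hbelow hlt]
    exact Set.left_mem_Icc.2 (tmin_le_tmax hR)
  rcases lt_or_ge (tmax R) (x : ℝ) with hgt | hmax
  · rw [habove hgt]
    exact Set.right_mem_Icc.2 (tmin_le_tmax hR)
  · rw [hbetween ⟨hmin, hmax⟩]
    exact ⟨hmin, hmax⟩

end Profile

/-- For n ≥ 2, every target rule with a default is efficient. -/
theorem stmt_17 (n : ℕ) (hn : 2 ≤ n) (f : (Fin n → S0) → A)
    (hT : IsTargetRule f) : Efficient f := by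
  intro R
  rcases eq_or_ne R (indiffProfile n) with rfl | hR
  · exact efficientAt_indiffProfile _
  · exact efficientAt_of_mem_Icc_tmin_tmax hR (hT.mem_Icc_tmin_tmax hR)
end
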